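/- For every α : ℕ → {0,1,2} and every n ∈ ℕ, |N(ᾱ(n+1)) − N(ρ(α)‾(n+1))| ≤ 1, where ᾱ(n+1) and ρ(α)‾(n+1) denote the initial segments of length n+1 of α and ρ(α). -/

import Mathlib

/-- `triN s` : numbering of the nodes of the ternary tree:
`N(⟨⟩) = 1`, `N(s * ⟨i⟩) = 2 * N(s) + i - 1`. -/
def triN (s : List (Fin 3)) : ℕ := s.foldl (fun a i => 2 * a + i.val - 1) 1

/-- Initial segment of length `n` of `α`. -/
def seg3 (α : ℕ → Fin 3) (n : ℕ) : List (Fin 3) := List.ofFn fun i : Fin n => α i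

/-- `rho3` is the identity on triples over `{0,1,2}` except on four patterns. -/
def rho3 : Fin 3 × Fin 3 × Fin 3 → Fin 3 × Fin 3 × Fin 3 := fun t =>
  if t = (1, 2, 2) then (2, 0, 2)
  else if t = (1, 0, 0) then (0, 2, 0)
  else if t = (0, 2, 2) then (1, 0, 2)
  else if t = (2, 0, 0) then (1, 2, 0)
  else t

/-- The auxiliary triples `σ^n_α`. -/
def sigAux (α : ℕ → Fin 3) : ℕ → Fin 3 × Fin 3 × Fin 3
  | 0 => rho3 (α 0, α 1, α 2)
  | n + 1 => rho3 ((sigAux α n).2.1, α (n + 2), α (n + 3))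

/-- The map `ρ : {0,1,2}^ℕ → {0,1,2}^ℕ`, `ρ(α)(n) = (σ^n_α)₀`. -/
def rho (α : ℕ → Fin 3) (n : ℕ) : Fin 3 := (sigAux α n).1

/-!
Read the digits `0, 1, 2` as `-1, 0, 1`: then `N` is evaluation in base two with signed digits and
leading digit `1`, and `ρ₃` preserves the value of the first two digits of its window. Hence the
first `n` output digits, followed by the digit still pending at the left of the window, have the
same number as the first `n + 1` input digits. The output digit at position `n` replaces the
pending one in the last place and differs from it by at most `1`.
-/

theorem triN_append_singleton_eq_sub (s : List (Fin 3)) (i : Fin 3) :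
    triN (s ++ [i]) = 2 * triN s + i.val - 1 := by
  simp only [triN, List.foldl_append, List.foldl_cons, List.foldl_nil]

theorem triN_pos (s : List (Fin 3)) : 0 < triN s := by
  induction s using List.reverseRecOn with
  | nil => exact Nat.one_pos
  | append_singleton s i ih =>
    rw [triN_append_singleton_eq_sub]
    omega

theorem cast_triN_append_singleton (s : List (Fin 3)) (i : Fin 3) :
    (triN (s ++ [i]) : ℤ) = 2 * triN s + i.val - 1 := by
  have s_pos := triN_pos s
  have append_eq := triN_append_singleton_eq_sub s i
  omega

theorem cast_triN_append_singleton_sub (s : List (Fin 3)) (i j : Fin 3) :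
    (triN (s ++ [i]) : ℤ) - triN (s ++ [j]) = (i.val : ℤ) - j.val := by
  rw [cast_triN_append_singleton, cast_triN_append_singleton]
  ring

theorem triN_append_congr_left {s t : List (Fin 3)} (h : triN s = triN t) (u : List (Fin 3)) :
    triN (s ++ u) = triN (t ++ u) := by
  simp only [triN, List.foldl_append] at h ⊢
  rw [h]

theorem triN_append_pair_eq_iff (s : List (Fin 3)) (x y x' y' : Fin 3) :
    triN (s ++ [x] ++ [y]) = triN (s ++ [x'] ++ [y']) ↔
      2 * x.val + y.val = 2 * x'.val + y'.val := by
  zify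
  simp only [cast_triN_append_singleton]
  constructor <;> intro h <;> linarith

theorem seg3_succ (α : ℕ → Fin 3) (n : ℕ) : seg3 α (n + 1) = seg3 α n ++ [α n] := by
  simp only [seg3, List.ofFn_succ', List.concat_eq_append, Fin.val_castSucc, Fin.val_last]

theorem two_mul_rho3_fst_add_rho3_snd : ∀ x y z : Fin 3,
    2 * (rho3 (x, y, z)).1.val + (rho3 (x, y, z)).2.1.val = 2 * x.val + y.val := by
  decide

theorem abs_sub_rho3_fst_le_one : ∀ x y z : Fin 3,
    |(x.val : ℤ) - (rho3 (x, y, z)).1.val| ≤ 1 := by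
  decide

/-- The digit entering the window of `ρ₃` at position `n` from the left: `α 0` at the start, and
afterwards the middle digit of the previous triple `σ^(n-1)_α`. It makes the two clauses in the
definition of `sigAux` uniform. -/
def pendingDigit (α : ℕ → Fin 3) : ℕ → Fin 3
  | 0 => α 0
  | n + 1 => (sigAux α n).2.1

theorem sigAux_eq_rho3 (α : ℕ → Fin 3) (n : ℕ) :
    sigAux α n = rho3 (pendingDigit α n, α (n + 1), α (n + 2)) := by
  cases n <;> rfl

theorem two_mul_rho_add_pendingDigit_succ (α : ℕ → Fin 3) (n : ℕ) :
    2 * (rho α n).val + (pendingDigit α (n + 1)).val =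
      2 * (pendingDigit α n).val + (α (n + 1)).val := by
  rw [rho, pendingDigit, sigAux_eq_rho3]
  exact two_mul_rho3_fst_add_rho3_snd _ _ _

theorem abs_pendingDigit_sub_rho_le_one (α : ℕ → Fin 3) (n : ℕ) :
    |((pendingDigit α n).val : ℤ) - (rho α n).val| ≤ 1 := by
  rw [rho, sigAux_eq_rho3]
  exact abs_sub_rho3_fst_le_one _ _ _

theorem triN_seg3_succ_eq_triN_seg3_rho_append (α : ℕ → Fin 3) (n : ℕ) :
    triN (seg3 α (n + 1)) = triN (seg3 (rho α) n ++ [pendingDigit α n]) := by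
  induction n with
  | zero => rfl
  | succ n ih =>
    calc triN (seg3 α (n + 2))
        = triN (seg3 α (n + 1) ++ [α (n + 1)]) := by rw [seg3_succ]
      _ = triN (seg3 (rho α) n ++ [pendingDigit α n] ++ [α (n + 1)]) :=
          triN_append_congr_left ih _
      _ = triN (seg3 (rho α) n ++ [rho α n] ++ [pendingDigit α (n + 1)]) :=
          (triN_append_pair_eq_iff ..).2 (two_mul_rho_add_pendingDigit_succ α n).symm
      _ = triN (seg3 (rho α) (n + 1) ++ [pendingDigit α (n + 1)]) := by rw [← seg3_succ]

theorem stmt6 (α : ℕ → Fin 3) (n : ℕ) :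
    |(triN (seg3 α (n + 1)) : ℤ) - (triN (seg3 (rho α) (n + 1)) : ℤ)| ≤ 1 := by
  rw [triN_seg3_succ_eq_triN_seg3_rho_append, seg3_succ (rho α), cast_triN_append_singleton_sub]
  exact abs_pendingDigit_sub_rho_le_one α n
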